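/- arXiv:2203.12513 — 3 statements merged into one kernel-verified Lean document; each statement's English description precedes it below -/
import Mathlib

section
/- Let G be a group, let T : G → GL(n, ℝ) be a group homomorphism (a linear representation of G on ℝ^n), and let A be a real m×n matrix of rank m. Then the following are equivalent: (i) for every g ∈ G, ker(A T_g) = ker(A) (equivalently, the row spaces — the ranges of the transposes — of all the matrices A T_g, g ∈ G, coincide); (ii) A is G-equivariant, i.e., there exists a group homomorphism T̃ : G → GL(m, ℝ) such that A T_g = T̃_g A for every g ∈ G. -/
/-!
The kernel condition says that every `T g` induces an injective endomorphism of `V ⧸ ker f`, which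
`f` identifies with `range f`. A linear `s` with `f ∘ s ∘ f = f` realises this action as
`f ∘ T g ∘ s`, which vanishes on the complement `ker (f ∘ s)` of `range f`; adding the projection
`1 - f ∘ s` makes it the identity there, so that the action on all of `W` is unital and injective
even when `f` is not surjective.
-/

open LinearMap

section PushforwardEnd

variable {R U V W : Type*} [Ring R] [AddCommGroup U] [Module R U] [AddCommGroup V] [Module R V]
  [AddCommGroup W] [Module R W] {f : V →ₗ[R] W} {s : W →ₗ[R] V}

theorem comp_comp_eq_of_ker_le_ker {k : V →ₗ[R] U} (hs : f ∘ₗ s ∘ₗ f = f) (hk : ker f ≤ ker k) :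
    k ∘ₗ s ∘ₗ f = k := by
  ext v
  have hv : s (f v) - v ∈ ker f := by
    rw [sub_mem_ker_iff]
    exact LinearMap.congr_fun hs v
  exact sub_mem_ker_iff.mp (hk hv)

/-- The endomorphism of `W` obtained by pushing the endomorphism `t` of `V` forward along `f`,
where `s` is a generalized inverse of `f`, that is, `f ∘ s ∘ f = f`. If `ker f ≤ ker (f ∘ t)`, the
second summand makes it the identity on the complement `ker (f ∘ s)` of the range of `f`. -/
def pushforwardEnd (f : V →ₗ[R] W) (s : W →ₗ[R] V) (t : Module.End R V) : Module.End R W :=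
  f ∘ₗ t ∘ₗ s + (1 - f ∘ₗ s)

theorem pushforwardEnd_apply (t : Module.End R V) (w : W) :
    pushforwardEnd f s t w = f (t (s w)) + (w - f (s w)) :=
  rfl

theorem pushforwardEnd_one : pushforwardEnd f s 1 = 1 :=
  add_sub_cancel (f ∘ₗ s) 1

theorem pushforwardEnd_comp {t : Module.End R V} (hs : f ∘ₗ s ∘ₗ f = f)
    (ht : ker f ≤ ker (f ∘ₗ t)) : pushforwardEnd f s t ∘ₗ f = f ∘ₗ t := by
  ext v
  have hfs : f (s (f v)) = f v := LinearMap.congr_fun hs v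
  have hft : f (t (s (f v))) = f (t v) :=
    LinearMap.congr_fun (comp_comp_eq_of_ker_le_ker hs ht) v
  rw [comp_apply, pushforwardEnd_apply, hfs, hft, sub_self, add_zero, comp_apply]

theorem pushforwardEnd_mul {t : Module.End R V} (u : Module.End R V) (hs : f ∘ₗ s ∘ₗ f = f)
    (ht : ker f ≤ ker (f ∘ₗ t)) :
    pushforwardEnd f s (t * u) = pushforwardEnd f s t * pushforwardEnd f s u := by
  ext w
  have h_range (v : V) : pushforwardEnd f s t (f v) = f (t v) :=
    LinearMap.congr_fun (pushforwardEnd_comp hs ht) v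
  have h_compl : pushforwardEnd f s t (w - f (s w)) = w - f (s w) := by
    rw [map_sub, h_range, pushforwardEnd_apply, add_sub_cancel_left]
  rw [Module.End.mul_apply, pushforwardEnd_apply u, map_add, h_range, h_compl,
    pushforwardEnd_apply, Module.End.mul_apply]

theorem ker_pushforwardEnd_eq_bot {t : Module.End R V} (hs : f ∘ₗ s ∘ₗ f = f)
    (ht : ker (f ∘ₗ t) = ker f) : ker (pushforwardEnd f s t) = ⊥ := by
  refine ker_eq_bot'.mpr fun w hw ↦ ?_
  have hfs (v : V) : f (s (f v)) = f v := LinearMap.congr_fun hs v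
  rw [pushforwardEnd_apply] at hw
  have h_range : f (t (s w)) = 0 := by
    simpa only [comp_apply, map_add, map_sub, map_zero, hfs, sub_self, add_zero]
      using congrArg (f ∘ₗ s) hw
  have h_ker : s w ∈ ker f := ht ▸ h_range
  simpa only [h_range, mem_ker.mp h_ker, zero_add, sub_zero] using hw

end PushforwardEnd

section Intertwining

variable {K G V W : Type*} [DivisionRing K] [Monoid G] [AddCommGroup V] [Module K V]
  [AddCommGroup W] [Module K W]

theorem exists_comp_comp_eq_self (f : V →ₗ[K] W) : ∃ s : W →ₗ[K] V, f ∘ₗ s ∘ₗ f = f := by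
  obtain ⟨r, hr⟩ := f.rangeRestrict.exists_rightInverse_of_surjective f.range_rangeRestrict
  obtain ⟨s, hs⟩ := r.exists_extend
  refine ⟨s, LinearMap.ext fun v ↦ ?_⟩
  have hsr : s (f v) = r (f.rangeRestrict v) := LinearMap.congr_fun hs (f.rangeRestrict v)
  have hfr : f (r (f.rangeRestrict v)) = f v :=
    congrArg Subtype.val (LinearMap.congr_fun hr (f.rangeRestrict v))
  rw [comp_apply, comp_apply, hsr, hfr]

theorem forall_ker_comp_eq_iff_exists_intertwining (T : G →* Module.End K V) (f : V →ₗ[K] W) :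
    (∀ g, ker (f ∘ₗ T g) = ker f) ↔
      ∃ T' : G →* Module.End K W, ∀ g, ker (T' g) = ⊥ ∧ f ∘ₗ T g = T' g ∘ₗ f := by
  refine ⟨fun h ↦ ?_, fun ⟨T', hT'⟩ g ↦ ?_⟩
  · obtain ⟨s, hs⟩ := exists_comp_comp_eq_self f
    let T' : G →* Module.End K W :=
      { toFun g := pushforwardEnd f s (T g)
        map_one' := by rw [map_one, pushforwardEnd_one]
        map_mul' g₁ g₂ := by rw [map_mul, pushforwardEnd_mul (T g₂) hs (h g₁).ge] }
    exact ⟨T', fun g ↦ ⟨ker_pushforwardEnd_eq_bot hs (h g), (pushforwardEnd_comp hs (h g).ge).symm⟩⟩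
  · rw [(hT' g).2, ker_comp_of_ker_eq_bot f (hT' g).1]

theorem forall_ker_comp_eq_iff_exists_generalLinearGroup [FiniteDimensional K W]
    (T : G →* Module.End K V) (f : V →ₗ[K] W) :
    (∀ g, ker (f ∘ₗ T g) = ker f) ↔
      ∃ T' : G →* LinearMap.GeneralLinearGroup K W,
        ∀ g, f ∘ₗ T g = (T' g : Module.End K W) ∘ₗ f := by
  rw [forall_ker_comp_eq_iff_exists_intertwining]
  constructor
  · rintro ⟨T', hT'⟩
    have h_unit (g : G) : IsUnit (T' g) := (isUnit_iff_ker_eq_bot _).mpr (hT' g).1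
    exact ⟨Units.liftRight T' (fun g ↦ (h_unit g).unit) fun _ ↦ rfl, fun g ↦ (hT' g).2⟩
  · rintro ⟨T', hT'⟩
    exact ⟨(Units.coeHom _).comp T', fun g ↦
      ⟨(isUnit_iff_ker_eq_bot _).mp (T' g).isUnit, hT' g⟩⟩

end Intertwining

theorem stmt2_general {K G m n : Type*} [Field K] [Monoid G] [Fintype m] [DecidableEq m]
    [Fintype n] [DecidableEq n] (T : G →* Matrix n n K) (A : Matrix m n K) :
    (∀ g, ker (A * T g).mulVecLin = ker A.mulVecLin) ↔
      ∃ T' : G →* Matrix.GeneralLinearGroup m K, ∀ g, A * T g = (T' g : Matrix m m K) * A := by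
  let ρ : G →* Module.End K (n → K) := (Matrix.toLinAlgEquiv' : _ ≃ₐ[K] _).toMonoidHom.comp T
  let e : (G →* Matrix.GeneralLinearGroup m K) ≃ (G →* LinearMap.GeneralLinearGroup K (m → K)) :=
    Matrix.GeneralLinearGroup.toLin.monoidHomCongrRightEquiv
  have h_mul_iff (T' : G →* Matrix.GeneralLinearGroup m K) (g : G) :
      A * T g = (T' g : Matrix m m K) * A ↔
        A.mulVecLin ∘ₗ ρ g = (e T' g : Module.End K (m → K)) ∘ₗ A.mulVecLin := by
    rw [← Matrix.toLin'.injective.eq_iff, Matrix.toLin'_mul, Matrix.toLin'_mul]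
    rfl
  simp only [Matrix.mulVecLin_mul, h_mul_iff]
  exact (forall_ker_comp_eq_iff_exists_generalLinearGroup ρ A.mulVecLin).trans
    e.exists_congr_right.symm

/-- for a linear representation `T : G → GL(n, ℝ)` and a full-rank `m × n`
matrix `A`, all the operators `A T_g` share the nullspace of `A` if and only if `A` is a
`G`-equivariant map, i.e. `A T_g = T̃_g A` for some representation `T̃ : G → GL(m, ℝ)`. -/
theorem stmt2 {G : Type*} [Group G] (n m : ℕ)
    (T : G →* Matrix.GeneralLinearGroup (Fin n) ℝ)
    (A : Matrix (Fin m) (Fin n) ℝ) (hA : A.rank = m) :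
    (∀ g : G,
        LinearMap.ker (A * ((T g : Matrix (Fin n) (Fin n) ℝ))).mulVecLin =
          LinearMap.ker A.mulVecLin) ↔
      (∃ T' : G →* Matrix.GeneralLinearGroup (Fin m) ℝ,
        ∀ g : G,
          A * ((T g : Matrix (Fin n) (Fin n) ℝ)) =
            ((T' g : Matrix (Fin m) (Fin m) ℝ)) * A) :=
  stmt2_general ((Units.coeHom _).comp T) A
end

section
/- Let N, n, m be positive integers and let T ∈ ℝ^{n×n} satisfy T^N = I_n, with T_ℂ denoting its complexification acting on ℂ^n. If m < max over ζ ∈ ℂ of dim_ℂ ker(T_ℂ − ζ·I_n), then for every real m×n matrix A there exists a nonzero u ∈ ℝ^n with A T^g u = 0 for all g ∈ {0,…,N−1}. Consequently, for every nonempty bounded X ⊆ ℝ^n the inferred set of the family {A T^g : g = 0,…,N−1} strictly contains X: the number of measurements m ≥ max_ζ dim_ℂ ker(T_ℂ − ζ·I_n) is necessary for model identification with the operators {A T^g}. -/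
/-!
Since `m` is smaller than the dimension of some eigenspace of `T_ℂ`, the map `A` kills a nonzero
eigenvector `w` there, and then `A T^g w = ζ^g A w = 0` for every `g`. All the matrices `A T^g` are
real, so applying a real-linear functional on `ℂ` to each coordinate of `w` again gives a common
kernel vector; a functional that does not vanish on some nonzero coordinate of `w` yields a nonzero
real one. The inferred set is stable under translation by common kernel vectors, so it contains a
line, and a bounded set does not. The same argument works for any field extension in place of
`ℂ / ℝ`.
-/

open Matrix
/-- Multiplicity of the eigenvalue `ζ ∈ ℂ` of the complexification of a real matrix `T`. -/
noncomputable def eigMult {n : ℕ} (T : Matrix (Fin n) (Fin n) ℝ) (ζ : ℂ) : ℕ :=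
  Module.finrank ℂ
    (LinearMap.ker ((T.map (fun x : ℝ => (x : ℂ)) - ζ • (1 : Matrix (Fin n) (Fin n) ℂ)).mulVecLin))

section InferredSet

variable {R E F ι κ : Type*} [Semiring R] [AddCommMonoid E] [Module R E] [AddCommMonoid F]
  [Module R F]

/-- The inferred set `X̂` of a signal set `X` under a family of linear measurements `A i`: the
vectors that no single measurement can tell apart from all of `X`. Model identification is
`inferredSet A X = X`. -/
def inferredSet (A : ι → E →ₗ[R] F) (X : Set E) : Set E :=
  {v | ∀ i, ∃ x ∈ X, A i v = A i x}

theorem subset_inferredSet (A : ι → E →ₗ[R] F) (X : Set E) : X ⊆ inferredSet A X :=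
  fun v hv _ => ⟨v, hv, rfl⟩

theorem inferredSet_subset_inferredSet_comp (A : ι → E →ₗ[R] F) (e : κ → ι) (X : Set E) :
    inferredSet A X ⊆ inferredSet (A ∘ e) X :=
  fun _ hv k => hv (e k)

theorem add_mem_inferredSet {A : ι → E →ₗ[R] F} {X : Set E} {x u : E} (hx : x ∈ X)
    (hu : ∀ i, A i u = 0) : x + u ∈ inferredSet A X :=
  fun i => ⟨x, hx, by rw [map_add, hu i, add_zero]⟩

end InferredSet

section Bounded

variable {K E F ι : Type*} [NontriviallyNormedField K] [NormedAddCommGroup E] [NormedSpace K E]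
  [AddCommMonoid F] [Module K F]

variable (K) in
theorem exists_add_smul_notMem_of_isBounded {X : Set E} (hX : Bornology.IsBounded X) (x : E)
    {u : E} (hu : u ≠ 0) : ∃ t : K, x + t • u ∉ X := by
  obtain ⟨C, hC⟩ := hX.exists_norm_le
  obtain ⟨t, ht⟩ := NormedField.exists_lt_norm K ((C + ‖x‖) / ‖u‖)
  rw [div_lt_iff₀ (norm_pos_iff.2 hu), ← norm_smul] at ht
  refine ⟨t, fun hmem => ht.not_ge ?_⟩
  calc ‖t • u‖ = ‖(x + t • u) - x‖ := by rw [add_sub_cancel_left]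
    _ ≤ ‖x + t • u‖ + ‖x‖ := norm_sub_le _ _
    _ ≤ C + ‖x‖ := by gcongr; exact hC _ hmem

theorem ssubset_inferredSet_of_isBounded {A : ι → E →ₗ[K] F} {X : Set E} (hne : X.Nonempty)
    (hX : Bornology.IsBounded X) {u : E} (hu : u ≠ 0) (hAu : ∀ i, A i u = 0) :
    X ⊂ inferredSet A X := by
  obtain ⟨x, hx⟩ := hne
  obtain ⟨t, ht⟩ := exists_add_smul_notMem_of_isBounded K hX x hu
  have hline : x + t • u ∈ inferredSet A X :=
    add_mem_inferredSet hx fun i => by rw [map_smul, hAu i, smul_zero]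
  exact ⟨subset_inferredSet A X, fun hsub => ht (hsub hline)⟩

end Bounded

theorem exists_hasEigenvector_apply_eq_zero {L V W : Type*} [Field L] [AddCommGroup V] [Module L V]
    [AddCommGroup W] [Module L W] [FiniteDimensional L W] {f : Module.End L V} {ζ : L}
    (h : Module.finrank L W < Module.finrank L (f.eigenspace ζ)) (A : V →ₗ[L] W) :
    ∃ w, f.HasEigenvector ζ w ∧ A w = 0 := by
  have : FiniteDimensional L (f.eigenspace ζ) := Module.finite_of_finrank_pos (by lia)
  have hker : (A.domRestrict (f.eigenspace ζ)).ker ≠ ⊥ := LinearMap.ker_ne_bot_of_finrank_lt h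
  obtain ⟨w, hAw, hw⟩ := Submodule.exists_mem_ne_zero_of_ne_bot hker
  exact ⟨w, ⟨w.2, by simpa using hw⟩, hAw⟩

section ScalarExtension

variable {K L m n ι : Type*} [Fintype n]

theorem mulVec_linearMap_comp [CommSemiring K] [Semiring L] [Algebra K L] (φ : L →ₗ[K] K)
    (B : Matrix m n K) (w : n → L) : B *ᵥ (φ ∘ w) = φ ∘ (B.map (algebraMap K L) *ᵥ w) := by
  ext i
  simp [mulVec, dotProduct, ← Algebra.smul_def]

theorem exists_ne_zero_mulVec_eq_zero_of_map [CommSemiring K] [Semiring L] [Algebra K L]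
    [Module.Projective K L] (B : ι → Matrix m n K) {w : n → L} (hw : w ≠ 0)
    (hB : ∀ i, (B i).map (algebraMap K L) *ᵥ w = 0) :
    ∃ u : n → K, u ≠ 0 ∧ ∀ i, B i *ᵥ u = 0 := by
  obtain ⟨j, hj⟩ := Function.ne_iff.1 hw
  obtain ⟨φ, hφ⟩ : ∃ φ : Module.Dual K L, φ (w j) ≠ 0 := by
    by_contra! hφ
    exact hj ((Module.forall_dual_apply_eq_zero_iff K (w j)).1 hφ)
  refine ⟨φ ∘ w, Function.ne_iff.2 ⟨j, hφ⟩, fun i => ?_⟩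
  rw [mulVec_linearMap_comp, hB i]
  ext
  exact map_zero φ

theorem mul_pow_mulVec_eq_zero [CommRing L] [DecidableEq n] {T : Matrix n n L} {A : Matrix m n L}
    {ζ : L} {w : n → L} (hw : Module.End.HasEigenvector (toLin' T) ζ w) (hA : A *ᵥ w = 0) (g : ℕ) :
    (A * T ^ g) *ᵥ w = 0 := by
  have hT : T ^ g *ᵥ w = ζ ^ g • w := by
    rw [← hw.pow_apply, ← toLin'_pow, toLin'_apply]
  rw [← mulVec_mulVec, hT, mulVec_smul, hA, smul_zero]

theorem exists_ne_zero_forall_mul_pow_mulVec_eq_zero [Field K] [Field L] [Algebra K L] [Fintype m]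
    [DecidableEq n] {T : Matrix n n K} {ζ : L}
    (h : Fintype.card m <
      Module.finrank L (Module.End.eigenspace (toLin' (T.map (algebraMap K L))) ζ))
    (A : Matrix m n K) : ∃ u : n → K, u ≠ 0 ∧ ∀ g : ℕ, (A * T ^ g) *ᵥ u = 0 := by
  obtain ⟨w, hw, hAw⟩ := exists_hasEigenvector_apply_eq_zero
    (by rwa [Module.finrank_fintype_fun_eq_card]) (A.map (algebraMap K L)).mulVecLin
  refine exists_ne_zero_mulVec_eq_zero_of_map _ hw.2 fun g => ?_
  rw [Matrix.map_mul, Matrix.map_pow]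
  exact mul_pow_mulVec_eq_zero hw hAw g

end ScalarExtension

theorem eigMult_eq_finrank_eigenspace {n : ℕ} (T : Matrix (Fin n) (Fin n) ℝ) (ζ : ℂ) :
    eigMult T ζ =
      Module.finrank ℂ (Module.End.eigenspace (toLin' (T.map (algebraMap ℝ ℂ))) ζ) := by
  rw [Module.End.eigenspace_def, Module.End.one_eq_id, ← toLin'_one, ← map_smul, ← map_sub]
  rfl

theorem stmt4_general {K L m n : Type*} [NontriviallyNormedField K] [Field L] [Algebra K L]
    [Fintype m] [Fintype n] [DecidableEq n] (T : Matrix n n K)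
    (h : ∃ ζ : L, Fintype.card m <
      Module.finrank L (Module.End.eigenspace (toLin' (T.map (algebraMap K L))) ζ))
    (A : Matrix m n K) :
    (∃ u : n → K, u ≠ 0 ∧ ∀ g : ℕ, (A * T ^ g) *ᵥ u = 0) ∧
      ∀ X : Set (n → K), X.Nonempty → Bornology.IsBounded X →
        X ⊂ inferredSet (fun g : ℕ => (A * T ^ g).mulVecLin) X := by
  obtain ⟨ζ, hζ⟩ := h
  obtain ⟨u, hu, hAu⟩ := exists_ne_zero_forall_mul_pow_mulVec_eq_zero hζ A
  exact ⟨⟨u, hu, hAu⟩, fun X hne hX => ssubset_inferredSet_of_isBounded hne hX hu hAu⟩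

/-- if `T^N = 1` and `m` is smaller than the maximal eigenvalue multiplicity of
the complexification of `T`, then for every `m × n` matrix `A` there is a nonzero `u` with
`A T^g u = 0` for all `g`, and consequently the inferred set of `{A T^g}` strictly contains
every nonempty bounded `X`. -/
theorem stmt4 (N n m : ℕ) (hN : 0 < N) (hn : 0 < n) (hm : 0 < m)
    (T : Matrix (Fin n) (Fin n) ℝ) (hT : T ^ N = 1)
    (hmlt : ∃ ζ : ℂ, m < eigMult T ζ) :
    ∀ A : Matrix (Fin m) (Fin n) ℝ,
      (∃ u : Fin n → ℝ, u ≠ 0 ∧ ∀ g : Fin N, (A * T ^ (g : ℕ)) *ᵥ u = 0) ∧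
        ∀ X : Set (Fin n → ℝ), X.Nonempty → Bornology.IsBounded X →
          X ⊂ {v | ∀ g : Fin N, ∃ x ∈ X, (A * T ^ (g : ℕ)) *ᵥ v = (A * T ^ (g : ℕ)) *ᵥ x} := by
  intro A
  obtain ⟨⟨u, hu, hAu⟩, hX⟩ := stmt4_general T
    (by simpa only [Fintype.card_fin, eigMult_eq_finrank_eigenspace] using hmlt) A
  exact ⟨⟨u, hu, fun g => hAu g⟩, fun X hne hb =>
    (hX X hne hb).trans_subset (inferredSet_subset_inferredSet_comp _ Fin.val X)⟩
end

section
/- Let S ⊆ ℝ^p be a bounded set and let G₀, G₁, …, G_t : S → ℝ^m be Lipschitz maps. For z ∈ S write Φ_z = [G₁(z), …, G_t(z)] ∈ ℝ^{m×t} for the matrix whose columns are G₁(z), …, G_t(z), and for each integer r ≥ 0 let S_r = {z ∈ S : rank(Φ_z) = r}. Assume that for every integer r ≥ 0, the set S_r is either empty or has upper box-counting dimension at most k_r for some real k_r < r. Then for (Lebesgue-)almost every α ∈ ℝ^t, there is no z ∈ S with G₀(z) + Φ_z α = 0 (writing G_α(z) = G₀(z) + Σ_{i=1}^t α_i G_i(z),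 the preimage G_α⁻¹(0) is empty for almost every α). -/
open MeasureTheory

/-- `S ⊆ ℝ^p` has upper box-counting dimension at most `k`. -/
def DimLE (p : ℕ) (S : Set (EuclideanSpace ℝ (Fin p))) (k : ℝ) : Prop :=
  ∀ δ : ℝ, 0 < δ → ∃ ε₀ ∈ Set.Ioo (0 : ℝ) 1, ∀ ε ∈ Set.Ioo (0 : ℝ) ε₀,
    ∃ C : Finset (EuclideanSpace ℝ (Fin p)),
      (C.card : ℝ) ≤ ε ^ (-(k + δ)) ∧ S ⊆ ⋃ c ∈ C, Metric.closedBall c ε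

/-!
For a fixed linear map `Φ` of rank `r` and a bounded set `K` of parameters, `α ∈ K` satisfies
`‖G + Φ α‖ ≤ η` only on a set of measure `O(η ^ r)`, because `Φ` pushes Lebesgue measure on
`K` to a measure of bounded density on the range of `Φ`. Cover `S_r` by `ε ^ (-d)` balls of
radius `ε`, where `k_r < d < r`: a zero of `G_α` in one of them makes `G_α` of size `O(ε)` at any
chosen point of `S_r` in that ball, so the bad parameters in `K` have measure
`O(ε ^ (-d) * ε ^ r) → 0`. The implied constants depend on `Φ_z` and on the Lipschitz constant of
`G_α`, but `S_r` and the parameter space are countable unions of pieces on which they are bounded.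
-/

open Set Metric Module Filter
open scoped NNReal ENNReal Topology

/-- Upper box-counting dimension at most `k`, the analogue of `DimLE` in an arbitrary pseudometric
space. The centres of the covering balls need not lie in `S`. -/
def UpperBoxDimLE {X : Type*} [PseudoMetricSpace X] (S : Set X) (k : ℝ) : Prop :=
  ∀ δ : ℝ, 0 < δ → ∃ ε₀ ∈ Ioo (0 : ℝ) 1, ∀ ε ∈ Ioo (0 : ℝ) ε₀,
    ∃ C : Finset X, (C.card : ℝ) ≤ ε ^ (-(k + δ)) ∧ S ⊆ ⋃ c ∈ C, closedBall c ε

theorem dimLE_iff_upperBoxDimLE {p : ℕ} {S : Set (EuclideanSpace ℝ (Fin p))} {k : ℝ} :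
    DimLE p S k ↔ UpperBoxDimLE S k :=
  Iff.rfl

namespace UpperBoxDimLE

variable {X : Type*} [PseudoMetricSpace X] {S T : Set X} {k : ℝ}

theorem mono (hST : S ⊆ T) (hT : UpperBoxDimLE T k) : UpperBoxDimLE S k := fun δ hδ ↦
  let ⟨ε₀, hε₀, hcover⟩ := hT δ hδ
  ⟨ε₀, hε₀, fun ε hε ↦ let ⟨C, hcard, hTC⟩ := hcover ε hε; ⟨C, hcard, hST.trans hTC⟩⟩

theorem empty (k : ℝ) : UpperBoxDimLE (∅ : Set X) k := fun _ _ ↦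
  ⟨1 / 2, by norm_num, fun ε hε ↦
    ⟨∅, by simpa only [Finset.card_empty, Nat.cast_zero] using Real.rpow_nonneg hε.1.le _,
      empty_subset _⟩⟩

theorem eventually_exists_finset_cover (hS : UpperBoxDimLE S k) {d : ℝ} (hd : k < d) :
    ∀ᶠ ε : ℝ in 𝓝[>] 0, ∃ C : Finset X,
      (C.card : ℝ≥0∞) ≤ ENNReal.ofReal ε ^ (-d) ∧ S ⊆ ⋃ c ∈ C, closedBall c ε := by
  obtain ⟨ε₀, hε₀, hcover⟩ := hS (d - k) (sub_pos.2 hd)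
  filter_upwards [Ioo_mem_nhdsGT hε₀.1] with ε hε
  obtain ⟨C, hcard, hSC⟩ := hcover ε hε
  rw [add_sub_cancel] at hcard
  refine ⟨C, ?_, hSC⟩
  rw [ENNReal.ofReal_rpow_of_pos hε.1, ← ENNReal.ofReal_natCast]
  exact ENNReal.ofReal_le_ofReal hcard

end UpperBoxDimLE

section Parameters

variable {Ω X Y : Type*} [MeasurableSpace Ω] {μ : Measure Ω} [PseudoMetricSpace X]
  [PseudoMetricSpace Y] {g : Ω → X → Y} {K : Set Ω} {T : Set X} {a : Y} {M : ℝ≥0} {k r : ℝ}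

theorem measure_exists_mem_closedBall_eq_le {C : ℝ≥0∞}
    (hg : ∀ ω ∈ K, LipschitzOnWith M (g ω) T)
    (hC : ∀ z ∈ T, ∀ η ≥ 0, μ {ω ∈ K | dist (g ω z) a ≤ η} ≤ C * ENNReal.ofReal η ^ r)
    (c : X) {ε : ℝ} (hε : 0 ≤ ε) :
    μ {ω ∈ K | ∃ z ∈ T ∩ closedBall c ε, g ω z = a} ≤ C * ENNReal.ofReal (M * (2 * ε)) ^ r := by
  rcases (T ∩ closedBall c ε).eq_empty_or_nonempty with hempty | ⟨z₀, hz₀, hz₀c⟩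
  · simp [hempty]
  refine (measure_mono ?_).trans (hC z₀ hz₀ _ (by positivity))
  rintro ω ⟨hω, z, ⟨hz, hzc⟩, hza⟩
  have hdist : dist z₀ z ≤ 2 * ε := by
    linarith [dist_triangle_right z₀ z c, mem_closedBall.1 hzc, mem_closedBall.1 hz₀c]
  refine ⟨hω, ?_⟩
  rw [← hza]
  exact ((hg ω hω).dist_le_mul z₀ hz₀ z hz).trans (by gcongr)

theorem eventually_measure_exists_eq_le {C : ℝ≥0∞} {d : ℝ} (hr : 0 ≤ r) (hkd : k < d)
    (hT : UpperBoxDimLE T k) (hg : ∀ ω ∈ K, LipschitzOnWith M (g ω) T)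
    (hC : ∀ z ∈ T, ∀ η ≥ 0, μ {ω ∈ K | dist (g ω z) a ≤ η} ≤ C * ENNReal.ofReal η ^ r) :
    ∀ᶠ ε : ℝ in 𝓝[>] 0, μ {ω ∈ K | ∃ z ∈ T, g ω z = a} ≤
      C * ENNReal.ofReal (M * 2) ^ r * ENNReal.ofReal ε ^ (r - d) := by
  filter_upwards [hT.eventually_exists_finset_cover hkd, self_mem_nhdsWithin]
    with ε ⟨N, hcard, hTN⟩ (hε : 0 < ε)
  have hcover : {ω ∈ K | ∃ z ∈ T, g ω z = a} ⊆
      ⋃ c ∈ N, {ω ∈ K | ∃ z ∈ T ∩ closedBall c ε, g ω z = a} := by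
    rintro ω ⟨hω, z, hz, hza⟩
    obtain ⟨c, hc, hzc⟩ := mem_iUnion₂.1 (hTN hz)
    exact mem_iUnion₂.2 ⟨c, hc, hω, z, ⟨hz, hzc⟩, hza⟩
  calc μ {ω ∈ K | ∃ z ∈ T, g ω z = a}
      ≤ ∑ c ∈ N, μ {ω ∈ K | ∃ z ∈ T ∩ closedBall c ε, g ω z = a} :=
        (measure_mono hcover).trans (measure_biUnion_finset_le _ _)
    _ ≤ ∑ _c ∈ N, C * ENNReal.ofReal (M * (2 * ε)) ^ r :=
        Finset.sum_le_sum fun c _ ↦ measure_exists_mem_closedBall_eq_le hg hC c hε.le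
    _ = N.card * (C * ENNReal.ofReal (M * 2) ^ r * ENNReal.ofReal ε ^ r) := by
        rw [Finset.sum_const, nsmul_eq_mul, ← mul_assoc (M : ℝ),
          ENNReal.ofReal_mul (by positivity), ENNReal.mul_rpow_of_nonneg _ _ hr, mul_assoc C]
    _ ≤ ENNReal.ofReal ε ^ (-d) *
          (C * ENNReal.ofReal (M * 2) ^ r * ENNReal.ofReal ε ^ r) := by gcongr
    _ = C * ENNReal.ofReal (M * 2) ^ r * ENNReal.ofReal ε ^ (r - d) := by
        rw [mul_left_comm, ← ENNReal.rpow_add _ _ (ENNReal.ofReal_pos.2 hε).ne'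
          ENNReal.ofReal_ne_top, neg_add_eq_sub]

theorem measure_exists_eq_eq_zero_of_uniform {C : ℝ≥0∞} (hC_top : C ≠ ∞) (hr : 0 ≤ r) (hkr : k < r)
    (hT : UpperBoxDimLE T k) (hg : ∀ ω ∈ K, LipschitzOnWith M (g ω) T)
    (hC : ∀ z ∈ T, ∀ η ≥ 0, μ {ω ∈ K | dist (g ω z) a ≤ η} ≤ C * ENNReal.ofReal η ^ r) :
    μ {ω ∈ K | ∃ z ∈ T, g ω z = a} = 0 := by
  obtain ⟨d, hkd, hdr⟩ := exists_between hkr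
  let D : ℝ≥0∞ := C * ENNReal.ofReal (M * 2) ^ r
  have hD : D ≠ ∞ := by finiteness
  have hlim : Tendsto (fun ε : ℝ ↦ D * ENNReal.ofReal ε ^ (r - d)) (𝓝[>] 0) (𝓝 0) := by
    have hcont : Continuous fun ε : ℝ ↦ D * ENNReal.ofReal ε ^ (r - d) :=
      (ENNReal.continuous_const_mul hD).comp
        (ENNReal.continuous_rpow_const.comp ENNReal.continuous_ofReal)
    refine (hcont.tendsto' 0 0 ?_).mono_left nhdsWithin_le_nhds
    rw [ENNReal.ofReal_zero, ENNReal.zero_rpow_of_pos (sub_pos.2 hdr), mul_zero]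
  exact le_antisymm (ge_of_tendsto hlim (eventually_measure_exists_eq_le hr hkd hT hg hC)) zero_le

theorem measure_exists_eq_eq_zero (hr : 0 ≤ r) (hkr : k < r)
    (hT : UpperBoxDimLE T k) (hg : ∀ ω ∈ K, LipschitzOnWith M (g ω) T)
    (hC : ∀ z ∈ T, ∃ C : ℝ≥0, ∀ η ≥ 0,
      μ {ω ∈ K | dist (g ω z) a ≤ η} ≤ C * ENNReal.ofReal η ^ r) :
    μ {ω ∈ K | ∃ z ∈ T, g ω z = a} = 0 := by
  let T' (n : ℕ) : Set X :=
    {z ∈ T | ∀ η ≥ 0, μ {ω ∈ K | dist (g ω z) a ≤ η} ≤ n * ENNReal.ofReal η ^ r}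
  have hT' (n : ℕ) : μ {ω ∈ K | ∃ z ∈ T' n, g ω z = a} = 0 :=
    measure_exists_eq_eq_zero_of_uniform (ENNReal.natCast_ne_top n) hr hkr
      (hT.mono (sep_subset T _)) (fun ω hω ↦ (hg ω hω).mono (sep_subset T _)) fun z hz ↦ hz.2
  refine measure_mono_null ?_ (measure_iUnion_null hT')
  rintro ω ⟨hω, z, hz, hza⟩
  obtain ⟨C, hCz⟩ := hC z hz
  obtain ⟨n, hn⟩ := exists_nat_ge C
  refine mem_iUnion.2 ⟨n, hω, z, ⟨hz, fun η hη ↦ (hCz η hη).trans ?_⟩, hza⟩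
  gcongr
  exact_mod_cast hn

end Parameters

section LinearMaps

variable {E V F : Type*}
  [NormedAddCommGroup E] [NormedSpace ℝ E] [FiniteDimensional ℝ E] [MeasurableSpace E]
  [BorelSpace E] (μ : Measure E) [μ.IsAddHaarMeasure]
  [NormedAddCommGroup V] [NormedSpace ℝ V] [MeasurableSpace V] [BorelSpace V]
  [NormedAddCommGroup F] [NormedSpace ℝ F]

theorem exists_measure_inter_preimage_le_mul (ν : Measure V) [ν.IsAddHaarMeasure] {f : E →ₗ[ℝ] V}
    (hf : Function.Surjective f) {K : Set E} (hK : Bornology.IsBounded K) :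
    ∃ C : ℝ≥0, ∀ A : Set V, μ (K ∩ f ⁻¹' A) ≤ C * ν A := by
  have : FiniteDimensional ℝ V := Module.Finite.of_surjective f hf
  obtain ⟨W, hW⟩ := f.ker.exists_isCompl
  let π : E →ₗ[ℝ] f.ker := f.ker.projectionOnto W hW
  let e : E ≃L[ℝ] V × f.ker := (f.equivProdOfSurjectiveOfIsCompl π (LinearMap.range_eq_top.2 hf)
    (Submodule.range_projectionOnto hW)
    (by rwa [Submodule.ker_projectionOnto])).toContinuousLinearEquiv
  let κ : Measure f.ker := Measure.addHaar
  obtain ⟨c, hc⟩ : ∃ c : ℝ≥0, μ.map e = c • ν.prod κ :=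
    have := e.isAddHaarMeasure_map μ
    ⟨_, Measure.isAddLeftInvariant_eq_smul _ _⟩
  have hπK : κ (π '' K) < ∞ := by
    have hπ := (LinearMap.toContinuousLinearMap π).lipschitz
    exact (hπ.isBounded_image hK).measure_lt_top
  refine ⟨c * (κ (π '' K)).toNNReal, fun A ↦ ?_⟩
  have hsub : K ∩ f ⁻¹' A ⊆ e ⁻¹' (A ×ˢ (π '' K)) := fun x hx ↦ ⟨hx.2, mem_image_of_mem π hx.1⟩
  calc μ (K ∩ f ⁻¹' A) ≤ μ (e ⁻¹' (A ×ˢ (π '' K))) := measure_mono hsub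
    _ = μ.map e (A ×ˢ (π '' K)) := (e.toHomeomorph.toMeasurableEquiv.map_apply _).symm
    _ = _ := by
      rw [hc, Measure.smul_apply, Measure.prod_prod, ENNReal.coe_mul,
        ENNReal.coe_toNNReal hπK.ne, ENNReal.smul_def, smul_eq_mul, mul_comm (ν A), mul_assoc]

theorem exists_measure_inter_preimage_closedBall_le (f : E →ₗ[ℝ] F) {K : Set E}
    (hK : Bornology.IsBounded K) :
    ∃ C : ℝ≥0, ∀ y, ∀ η ≥ 0,
      μ (K ∩ f ⁻¹' closedBall y η) ≤ C * ENNReal.ofReal η ^ finrank ℝ f.range := by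
  borelize ↥f.range
  let ν : Measure f.range := Measure.addHaar
  obtain ⟨C, hC⟩ := exists_measure_inter_preimage_le_mul μ ν f.surjective_rangeRestrict hK
  refine ⟨C * (2 ^ finrank ℝ f.range * (ν (ball 0 1)).toNNReal), fun y η hη ↦ ?_⟩
  rcases (f ⁻¹' closedBall y η).eq_empty_or_nonempty with hempty | ⟨x₀, hx₀⟩
  · simp only [hempty, inter_empty, measure_empty, zero_le]
  have hsub : f ⁻¹' closedBall y η ⊆
      f.rangeRestrict ⁻¹' closedBall (f.rangeRestrict x₀) (2 * η) := fun x hx ↦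
    calc dist (f x) (f x₀) ≤ dist (f x) y + dist (f x₀) y := dist_triangle_right _ _ _
      _ ≤ η + η := add_le_add hx hx₀
      _ = 2 * η := (two_mul η).symm
  calc μ (K ∩ f ⁻¹' closedBall y η) ≤ C * ν (closedBall (f.rangeRestrict x₀) (2 * η)) :=
        (measure_mono (inter_subset_inter_right K hsub)).trans (hC _)
    _ = _ := by
      rw [Measure.addHaar_closedBall ν _ (by positivity), ENNReal.ofReal_pow (by positivity),
        ENNReal.ofReal_mul zero_le_two, ENNReal.ofReal_ofNat, mul_pow, ENNReal.coe_mul,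
        ENNReal.coe_mul, ENNReal.coe_toNNReal measure_ball_lt_top.ne, ENNReal.coe_pow,
        ENNReal.coe_ofNat]
      ring

theorem stmt11_general {X : Type*} [PseudoMetricSpace X] {S : Set X} (G : X → F)
    (Φ : X → E →ₗ[ℝ] F) (hLip : ∀ α, ∃ L : ℝ≥0, LipschitzOnWith L (fun z ↦ G z + Φ z α) S)
    (hdim : ∀ r : ℕ, ∃ k < (r : ℝ), UpperBoxDimLE {z ∈ S | finrank ℝ (Φ z).range = r} k) :
    ∀ᵐ α ∂μ, ∀ z ∈ S, G z + Φ z α ≠ 0 := by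
  let K (n : ℕ) : Set E := {α ∈ closedBall 0 n | LipschitzOnWith n (fun z ↦ G z + Φ z α) S}
  have hnull (r n : ℕ) :
      μ {α ∈ K n | ∃ z ∈ {z ∈ S | finrank ℝ (Φ z).range = r}, G z + Φ z α = 0} = 0 := by
    obtain ⟨k, hkr, hk⟩ := hdim r
    refine measure_exists_eq_eq_zero r.cast_nonneg hkr hk
      (fun α hα ↦ hα.2.mono (sep_subset S _)) ?_
    rintro z ⟨-, rfl⟩
    obtain ⟨C, hC⟩ := exists_measure_inter_preimage_closedBall_le μ (Φ z)
      (isBounded_closedBall.subset (sep_subset _ _) : Bornology.IsBounded (K n))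
    refine ⟨C, fun η hη ↦ ?_⟩
    have hset : {α ∈ K n | dist (G z + Φ z α) 0 ≤ η} = K n ∩ Φ z ⁻¹' closedBall (-G z) η := by
      ext α
      simp [dist_eq_norm, add_comm]
    simpa only [ENNReal.rpow_natCast, hset] using hC (-G z) η hη
  filter_upwards [ae_all_iff.2 fun r ↦ ae_all_iff.2 fun n ↦
    measure_eq_zero_iff_ae_notMem.1 (hnull r n)] with α hα z hz hzero
  obtain ⟨L, hL⟩ := hLip α
  obtain ⟨n, hn⟩ := exists_nat_ge (max ‖α‖₊ L)
  have hαK : α ∈ K n := ⟨mem_closedBall_zero_iff.2 (mod_cast (le_max_left _ _).trans hn),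
    hL.weaken ((le_max_right _ _).trans hn)⟩
  exact hα _ n ⟨hαK, z, ⟨hz, rfl⟩, hzero⟩

end LinearMaps

theorem exists_lipschitzOnWith_add_sum_smul {ι X F : Type*} [Fintype ι] [PseudoMetricSpace X]
    [SeminormedAddCommGroup F] [NormedSpace ℝ F] {S : Set X} {f : X → F} {g : ι → X → F}
    (hf : ∃ L : ℝ≥0, LipschitzOnWith L f S) (hg : ∀ i, ∃ L : ℝ≥0, LipschitzOnWith L (g i) S)
    (α : ι → ℝ) : ∃ L : ℝ≥0, LipschitzOnWith L (fun z ↦ f z + ∑ i, α i • g i z) S := by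
  choose Lf hf using hf
  choose Lg hg using hg
  refine ⟨Lf + ∑ i, ‖α i‖₊ * Lg i, hf.add ?_⟩
  refine LipschitzOnWith.of_dist_le_mul fun x hx y hy ↦ ?_
  push_cast
  rw [Finset.sum_mul]
  refine (dist_sum_sum_le _ _ _).trans (Finset.sum_le_sum fun i _ ↦ ?_)
  exact ((lipschitzWith_smul (α i)).comp_lipschitzOnWith (hg i)).dist_le_mul x hx y hy

theorem rank_matrix_of_eq_finrank_range_linearCombination {R m ι : Type*} [CommRing R]
    [Fintype ι] {q : ℝ≥0∞} (v : ι → WithLp q (m → R)) :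
    (Matrix.of fun i j ↦ v j i).rank = finrank R (Fintype.linearCombination R v).range := by
  rw [Matrix.rank_eq_finrank_span_cols, Fintype.range_linearCombination,
    ← LinearEquiv.finrank_map_eq (WithLp.linearEquiv q R (m → R)), Submodule.map_span,
    ← range_comp]
  rfl

/-- Sauer et al.: if `S` is bounded, `G₀, G₁, …, G_t` are Lipschitz on `S`,
and for every `r` the set `S_r = {z ∈ S : rank Φ_z = r}` is empty or has upper box-counting
dimension at most some `k_r < r`, then for almost every `α ∈ ℝ^t` there is no `z ∈ S` with
`G₀(z) + Φ_z α = 0`. -/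
theorem stmt11 (p m t : ℕ) (S : Set (EuclideanSpace ℝ (Fin p)))
    (hS : Bornology.IsBounded S)
    (G0 : EuclideanSpace ℝ (Fin p) → EuclideanSpace ℝ (Fin m))
    (Gs : Fin t → EuclideanSpace ℝ (Fin p) → EuclideanSpace ℝ (Fin m))
    (hG0 : ∃ L : NNReal, LipschitzOnWith L G0 S)
    (hGs : ∀ i : Fin t, ∃ L : NNReal, LipschitzOnWith L (Gs i) S)
    (hdim : ∀ r : ℕ,
      {z ∈ S | (Matrix.of fun (i : Fin m) (j : Fin t) => Gs j z i).rank = r} = ∅ ∨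
      ∃ kr : ℝ, kr < r ∧
        DimLE p {z ∈ S | (Matrix.of fun (i : Fin m) (j : Fin t) => Gs j z i).rank = r} kr) :
    ∀ᵐ α ∂(volume : Measure (Fin t → ℝ)),
      ∀ z ∈ S, G0 z + ∑ i : Fin t, α i • Gs i z ≠ 0 := by
  simp only [rank_matrix_of_eq_finrank_range_linearCombination, dimLE_iff_upperBoxDimLE] at hdim
  refine stmt11_general volume G0 (fun z ↦ Fintype.linearCombination ℝ (Gs · z))
    (exists_lipschitzOnWith_add_sum_smul hG0 hGs) fun r ↦ (hdim r).elim (fun hempty ↦ ?_) id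
  exact ⟨r - 1, sub_one_lt _, hempty ▸ UpperBoxDimLE.empty _⟩
end
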